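/- arXiv:2005.13223 — 2 statements merged into one kernel-verified Lean document; each statement's English description precedes it below -/
import Mathlib

section
/- Let q be a real number with 0 < q and q ≠ 1, let h₁, h₂, α₁, λ be real numbers and t₁, t₂ nonzero reals. Assume λ + α₁ = -N for some positive integer N (so (q^{λ+α₁};q)_n = 0 for all n > N and the series below is a finite sum). Then the function g(x) = x^{-α₁} · Σ_{n=0}^{N} (q^{-λ-α₁+1/2}/x)^n · (q^{λ+α₁};q)_n · Σ_{ℓ=0}^{n} q^{-ℓ(n-ℓ)} · (q^{h₁}t₁)^{n-ℓ} · (q^{h₂}t₂)^{ℓ} / ((q;q)_{n-ℓ}(q;q)_ℓ) satisfies the variant of the confluent q-hypergeometric equation of type (0,2) for all x > 0. -/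
/-- The finite q-shifted factorial `(a;q)_n = ∏_{i=0}^{n-1} (1 - a q^i)`. -/
noncomputable def qPoch (q a : ℝ) (n : ℕ) : ℝ :=
  ∏ i ∈ Finset.range n, (1 - a * q ^ i)

/-- The variant of the confluent q-hypergeometric equation of type (0,2) (for `x > 0`). -/
def confEq02 (q h₁ h₂ α₁ lam t₁ t₂ : ℝ) (g : ℝ → ℝ) : Prop :=
  ∀ x : ℝ, 0 < x →
    g (q * x)
    + q ^ (2 * lam + 1) * (1 - q ^ (-h₁ - 1/2) * t₁⁻¹ * x) * (1 - q ^ (-h₂ - 1/2) * t₂⁻¹ * x)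
        * g (x / q)
    - (q ^ (α₁ + 2 * lam - h₁ - h₂) * t₁⁻¹ * t₂⁻¹ * x ^ 2
        - q ^ (lam + 1/2) * (q ^ (-h₁) * t₁⁻¹ + q ^ (-h₂) * t₂⁻¹) * x
        + q ^ lam * (q + 1)) * g x = 0

/-! Euler's series `E_A = ∑ q^(n choose 2) A^n X^n / (q;q)_n` satisfies
`E_A(X) = (1 + A X) E_A(q X)`, so `F = E_A E_B` satisfies `F(X) = (1 + A X)(1 + B X) F(q X)`. The
coefficients of `F` are, up to the factor `q^(n choose 2)`, the inner sums `S_n` of the claimed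
solution, and the functional equation becomes a three-term recurrence for them. That recurrence says
that `∑ (a;q)_n S_n y^n` with `a = q^(λ+α₁)` solves a q-difference equation in `y`, into which the
variant of the confluent equation turns under `g(x) = x^(-α₁) f(y)`, `y = q^(-λ-α₁+1/2) / x`. -/

section qShiftedFactorial

lemma qPoch_succ (q a : ℝ) (n : ℕ) : qPoch q a (n + 1) = qPoch q a n * (1 - a * q ^ n) :=
  Finset.prod_range_succ _ n

lemma qPoch_self_succ (q : ℝ) (n : ℕ) : qPoch q q (n + 1) = qPoch q q n * (1 - q ^ (n + 1)) := by
  rw [qPoch_succ, pow_succ']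

variable {q a : ℝ}

lemma qPoch_eq_zero_of_lt {m n : ℕ} (ha : a * q ^ m = 1) (hmn : m < n) : qPoch q a n = 0 :=
  Finset.prod_eq_zero (Finset.mem_range.2 hmn) (sub_eq_zero.2 ha.symm)

lemma one_sub_pow_succ_ne_zero (hq : |q| ≠ 1) (n : ℕ) : 1 - q ^ (n + 1) ≠ 0 := by
  intro h
  have habs : |q| ^ (n + 1) = 1 := by rw [← abs_pow, ← sub_eq_zero.1 h, abs_one]
  exact hq ((pow_eq_one_iff_of_nonneg (abs_nonneg q) n.succ_ne_zero).1 habs)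

lemma qPoch_self_ne_zero (hq : |q| ≠ 1) (n : ℕ) : qPoch q q n ≠ 0 := by
  induction n with
  | zero => simp [qPoch]
  | succ n ih =>
    rw [qPoch_self_succ]
    exact mul_ne_zero ih (one_sub_pow_succ_ne_zero hq n)

end qShiftedFactorial

lemma choose_two_add (k l : ℕ) : (k + l).choose 2 = k.choose 2 + l.choose 2 + k * l := by
  induction l with
  | zero => simp
  | succ l ih =>
    rw [← add_assoc, Nat.choose_succ_succ', Nat.choose_succ_succ' l, ih, Nat.choose_one_right,
      Nat.choose_one_right]
    ring

section RogersSzego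

open PowerSeries

/-- Euler's q-exponential series `∑ q^(n choose 2) (A X)^n / (q;q)_n`, the formal expansion of
`(-A X; q)_∞`. -/
noncomputable def eulerSeries (q A : ℝ) : ℝ⟦X⟧ :=
  mk fun n => q ^ n.choose 2 * A ^ n / qPoch q q n

/-- The homogeneous Rogers–Szegő polynomial in base `q⁻¹`, divided by `(q;q)_n`; it is the inner sum
of the solution. -/
noncomputable def rogersSzegoInv (q A B : ℝ) (n : ℕ) : ℝ :=
  ∑ z ∈ Finset.HasAntidiagonal.antidiagonal n,
    q⁻¹ ^ (z.1 * z.2) * A ^ z.1 * B ^ z.2 / (qPoch q q z.1 * qPoch q q z.2)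

variable {q : ℝ}

lemma sum_range_eq_rogersSzegoInv (hq : 0 ≤ q) (A B : ℝ) (n : ℕ) :
    ∑ l ∈ Finset.range (n + 1), q ^ (-(l : ℝ) * ((n : ℝ) - (l : ℝ))) * A ^ (n - l) * B ^ l /
      (qPoch q q (n - l) * qPoch q q l) = rogersSzegoInv q A B n := by
  rw [rogersSzegoInv, ← Finset.Nat.sum_antidiagonal_swap,
    Finset.Nat.sum_antidiagonal_eq_sum_range_succ_mk]
  refine Finset.sum_congr rfl fun l hl => ?_
  have hln : l ≤ n := Finset.mem_range_succ_iff.1 hl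
  have hpow : q ^ (-(l : ℝ) * ((n : ℝ) - (l : ℝ))) = q⁻¹ ^ ((n - l) * l) := by
    rw [inv_pow, ← Real.rpow_natCast, ← Real.rpow_neg hq, Nat.cast_mul, Nat.cast_sub hln,
      neg_mul, mul_comm]
  rw [hpow, Prod.swap_prod_mk]

lemma eulerSeries_eq_mul_rescale (hq : |q| ≠ 1) (A : ℝ) :
    eulerSeries q A = (1 + C A * X) * rescale q (eulerSeries q A) := by
  ext n
  rw [add_mul, one_mul, mul_assoc, map_add, coeff_C_mul]
  cases n with
  | zero => simp
  | succ n =>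
    have hn := qPoch_self_ne_zero hq n
    have hfactor := one_sub_pow_succ_ne_zero hq n
    simp only [coeff_succ_X_mul, coeff_rescale, eulerSeries, coeff_mk, qPoch_self_succ,
      Nat.choose_succ_succ' n, Nat.choose_one_right]
    field_simp
    ring

lemma coeff_eulerSeries_mul (hq : q ≠ 0) (A B : ℝ) (n : ℕ) :
    coeff n (eulerSeries q A * eulerSeries q B) = q ^ n.choose 2 * rogersSzegoInv q A B n := by
  rw [coeff_mul, rogersSzegoInv, Finset.mul_sum]
  refine Finset.sum_congr rfl fun z hz => ?_
  rw [← Finset.HasAntidiagonal.mem_antidiagonal.1 hz, choose_two_add, eulerSeries,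
    eulerSeries, coeff_mk, coeff_mk, pow_add, pow_add, inv_pow]
  field_simp

lemma eulerSeries_mul_eq_rescale (hq : |q| ≠ 1) (A B : ℝ) :
    eulerSeries q A * eulerSeries q B =
      (1 + C (A + B) * X + C (A * B) * X ^ 2) *
        rescale q (eulerSeries q A * eulerSeries q B) := by
  conv_lhs => rw [eulerSeries_eq_mul_rescale hq A, eulerSeries_eq_mul_rescale hq B]
  simp only [map_mul, map_add]
  ring

lemma rogersSzegoInv_one (hq₀ : q ≠ 0) (hq : |q| ≠ 1) (A B : ℝ) :
    (1 - q) * rogersSzegoInv q A B 1 = (A + B) * rogersSzegoInv q A B 0 := by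
  have h := congrArg (coeff (0 + 1)) (eulerSeries_mul_eq_rescale hq A B)
  have hX : ¬2 ≤ 0 + 1 := by lia
  simp only [add_mul, one_mul, mul_assoc, map_add, coeff_C_mul, coeff_X_pow_mul', if_neg hX,
    coeff_succ_X_mul, coeff_rescale, coeff_eulerSeries_mul hq₀, zero_add, Nat.choose_succ_self,
    Nat.choose_zero_succ, pow_zero, pow_one, mul_zero, add_zero] at h
  linear_combination h

lemma rogersSzegoInv_add_two (hq₀ : q ≠ 0) (hq : |q| ≠ 1) (A B : ℝ) (n : ℕ) :
    (1 - q ^ (n + 2)) * rogersSzegoInv q A B (n + 2) =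
      (A + B) * rogersSzegoInv q A B (n + 1) +
        A * B * q⁻¹ ^ (n + 1) * rogersSzegoInv q A B n := by
  have h := congrArg (coeff (n + 2)) (eulerSeries_mul_eq_rescale hq A B)
  simp only [add_mul, one_mul, mul_assoc, map_add, coeff_C_mul, coeff_X_pow_mul,
    coeff_succ_X_mul, coeff_rescale, coeff_eulerSeries_mul hq₀, choose_two_add n,
    Nat.choose_self, Nat.choose_succ_self] at h
  refine mul_left_cancel₀ (pow_ne_zero (n.choose 2 + 2 * n + 1) hq₀) ?_
  rw [inv_pow]
  field_simp
  refine mul_left_cancel₀ (pow_ne_zero (n.choose 2 + n) hq₀) ?_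
  linear_combination h

end RogersSzego

section QDifferenceEquation

/-- The q-difference operator in the variable `y = q^(-λ-α₁+1/2) / x` corresponding to `confEq02`
for `g x = x ^ (-α₁) * f y`, with `a = q^(λ+α₁)`, `A = q^h₁ t₁` and `B = q^h₂ t₂`. -/
noncomputable def reducedOp02 (q a A B : ℝ) (f : ℝ → ℝ) (y : ℝ) : ℝ :=
  (1 - a * A * y) * (1 - a * B * y) * f (q * y) -
    (1 - (A + B) * y + (1 + q) / q * a * A * B * y ^ 2) * f y + A * B / q * y ^ 2 * f (y / q)

variable {q a A B : ℝ}

lemma div_mul_reducedOp02 {y : ℝ} (hq : q ≠ 0) (ha : a ≠ 0) (hA : A ≠ 0) (hB : B ≠ 0) (hy : y ≠ 0)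
    (f : ℝ → ℝ) :
    q / (a * A * B * y ^ 2) * reducedOp02 q a A B f y =
      a⁻¹ * f (y / q) + a * q * (1 - (a * A * y)⁻¹) * (1 - (a * B * y)⁻¹) * f (q * y) -
        (a * q * (a * A * y)⁻¹ * (a * B * y)⁻¹ - q * ((a * A * y)⁻¹ + (a * B * y)⁻¹) + (q + 1)) *
          f y := by
  rw [reducedOp02]
  field_simp
  ring

open Polynomial

/-- The polynomial `∑_{n ≤ N} (a;q)_n S_n y^n`, where `S_n` is `rogersSzegoInv`. It is the whole
series when `a q^N = 1`. -/
noncomputable def truncatedSeries (q a A B : ℝ) (N : ℕ) : ℝ[X] :=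
  ∑ n ∈ Finset.range (N + 1), monomial n (qPoch q a n * rogersSzegoInv q A B n)

lemma coeff_truncatedSeries {N : ℕ} (ha : a * q ^ N = 1) (n : ℕ) :
    (truncatedSeries q a A B N).coeff n = qPoch q a n * rogersSzegoInv q A B n := by
  simp only [truncatedSeries, finsetSum_coeff, coeff_monomial, Finset.sum_ite_eq',
    Finset.mem_range]
  split_ifs with hn
  · rfl
  · rw [qPoch_eq_zero_of_lt ha (by lia), zero_mul]

lemma qDifference_eq_zero_of_coeff {P : ℝ[X]} (hq₀ : q ≠ 0) (hq : |q| ≠ 1)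
    (hP : ∀ n, P.coeff n = qPoch q a n * rogersSzegoInv q A B n) :
    P.comp (C q * X) - P + C (A + B) * (X * (P - C a * P.comp (C q * X))) +
      C (A * B / q) * (X ^ 2 * (P.comp (C q⁻¹ * X) - C (a * (1 + q)) * P +
        C (a ^ 2 * q) * P.comp (C q * X))) = 0 := by
  ext n
  rcases n with _ | _ | n
  · simp
  · have h := rogersSzegoInv_one hq₀ hq A B
    have hX : ¬2 ≤ 0 + 1 := by lia
    simp only [coeff_add, coeff_sub, coeff_C_mul, coeff_X_mul, coeff_X_pow_mul', if_neg hX,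
      comp_C_mul_X_coeff, hP, qPoch_succ, coeff_zero, zero_add, pow_zero, pow_one, mul_zero,
      add_zero, mul_one]
    linear_combination -qPoch q a 0 * (1 - a) * h
  · have h := rogersSzegoInv_add_two hq₀ hq A B n
    simp only [coeff_add, coeff_sub, coeff_C_mul, coeff_X_mul, coeff_X_pow_mul,
      comp_C_mul_X_coeff, hP, qPoch_succ, coeff_zero]
    rw [inv_pow] at h ⊢
    linear_combination (norm := skip) -qPoch q a n * (1 - a * q ^ n) * (1 - a * q ^ (n + 1)) * h
    field_simp
    ring

lemma reducedOp02_eval_eq_zero {P : ℝ[X]} (hq₀ : q ≠ 0) (hq : |q| ≠ 1)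
    (hP : ∀ n, P.coeff n = qPoch q a n * rogersSzegoInv q A B n) (y : ℝ) :
    reducedOp02 q a A B (fun y => P.eval y) y = 0 := by
  have h := congrArg (eval y) (qDifference_eq_zero_of_coeff hq₀ hq hP)
  simp only [eval_add, eval_sub, eval_mul, eval_pow, eval_C, eval_X, eval_comp, eval_zero] at h
  rw [inv_mul_eq_div] at h
  rw [reducedOp02, ← h]
  field_simp
  ring

end QDifferenceEquation

section ChangeOfVariable

variable {q : ℝ}

lemma rpow_mul_inv_mul_eq_inv (hq : 0 < q) (h α₁ lam t x : ℝ) :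
    q ^ (-h - 1 / 2) * t⁻¹ * x =
      (q ^ (lam + α₁) * (q ^ h * t) * (q ^ (-lam - α₁ + 1 / 2) / x))⁻¹ := by
  have hexp : q ^ (-h - 1 / 2) =
      (q ^ (lam + α₁))⁻¹ * (q ^ h)⁻¹ * (q ^ (-lam - α₁ + 1 / 2))⁻¹ := by
    simp only [← Real.rpow_neg hq.le, ← Real.rpow_add hq]
    ring_nf
  rw [hexp]
  simp only [mul_inv, inv_div]
  ring

lemma rpow_quadratic_coeff (hq : 0 < q) (h₁ h₂ α₁ lam t₁ t₂ x : ℝ) :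
    q ^ (α₁ + 2 * lam - h₁ - h₂) * t₁⁻¹ * t₂⁻¹ * x ^ 2 =
      q ^ lam * q ^ (lam + α₁) * q *
        (q ^ (-h₁ - 1 / 2) * t₁⁻¹ * x) * (q ^ (-h₂ - 1 / 2) * t₂⁻¹ * x) := by
  have hexp : q ^ (α₁ + 2 * lam - h₁ - h₂) =
      q ^ lam * q ^ (lam + α₁) * q * q ^ (-h₁ - 1 / 2) * q ^ (-h₂ - 1 / 2) := by
    rw [← Real.rpow_add hq, ← Real.rpow_add_one hq.ne', ← Real.rpow_add hq, ← Real.rpow_add hq]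
    ring_nf
  rw [hexp]
  ring

lemma rpow_linear_coeff (hq : 0 < q) (h₁ h₂ lam t₁ t₂ x : ℝ) :
    q ^ (lam + 1 / 2) * (q ^ (-h₁) * t₁⁻¹ + q ^ (-h₂) * t₂⁻¹) * x =
      q ^ lam * q * (q ^ (-h₁ - 1 / 2) * t₁⁻¹ * x + q ^ (-h₂ - 1 / 2) * t₂⁻¹ * x) := by
  have hexp (h : ℝ) : q ^ (lam + 1 / 2) * q ^ (-h) = q ^ lam * q * q ^ (-h - 1 / 2) := by
    rw [← Real.rpow_add hq, ← Real.rpow_add_one hq.ne', ← Real.rpow_add hq]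
    ring_nf
  linear_combination t₁⁻¹ * x * hexp h₁ + t₂⁻¹ * x * hexp h₂

lemma confEq02_of_reducedOp02_eq_zero {h₁ h₂ α₁ lam t₁ t₂ : ℝ} {f : ℝ → ℝ} (hq : 0 < q)
    (ht₁ : t₁ ≠ 0) (ht₂ : t₂ ≠ 0)
    (hf : ∀ y, 0 < y →
      reducedOp02 q (q ^ (lam + α₁)) (q ^ h₁ * t₁) (q ^ h₂ * t₂) f y = 0) :
    confEq02 q h₁ h₂ α₁ lam t₁ t₂ fun x => x ^ (-α₁) * f (q ^ (-lam - α₁ + 1 / 2) / x) := by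
  intro x hx
  have hdilate : (q * x) ^ (-α₁) = q ^ lam * (q ^ (lam + α₁))⁻¹ * x ^ (-α₁) := by
    rw [Real.mul_rpow hq.le hx.le, ← Real.rpow_neg hq.le, ← Real.rpow_add hq]
    ring_nf
  have hcontract : q ^ (2 * lam + 1) * (x / q) ^ (-α₁) =
      q ^ lam * q ^ (lam + α₁) * q * x ^ (-α₁) := by
    rw [Real.div_rpow hx.le hq.le, Real.rpow_neg hq.le, div_inv_eq_mul, two_mul,
      Real.rpow_add_one hq.ne', Real.rpow_add hq, Real.rpow_add hq]
    ring
  have hy_div : q ^ (-lam - α₁ + 1 / 2) / (q * x) = q ^ (-lam - α₁ + 1 / 2) / x / q := by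
    rw [div_div, mul_comm x]
  have hy_mul : q ^ (-lam - α₁ + 1 / 2) / (x / q) = q * (q ^ (-lam - α₁ + 1 / 2) / x) := by
    field_simp
  have hred := div_mul_reducedOp02 (a := q ^ (lam + α₁)) (A := q ^ h₁ * t₁) (B := q ^ h₂ * t₂)
    (y := q ^ (-lam - α₁ + 1 / 2) / x) hq.ne' (by positivity) (by positivity) (by positivity)
    (by positivity) f
  rw [hf _ (by positivity), mul_zero, ← rpow_mul_inv_mul_eq_inv hq,
    ← rpow_mul_inv_mul_eq_inv hq] at hred
  simp only [rpow_quadratic_coeff hq, rpow_linear_coeff hq, hy_div, hy_mul, hdilate]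
  linear_combination -(q ^ lam * x ^ (-α₁)) * hred +
    (1 - q ^ (-h₁ - 1 / 2) * t₁⁻¹ * x) * (1 - q ^ (-h₂ - 1 / 2) * t₂⁻¹ * x) *
      f (q * (q ^ (-lam - α₁ + 1 / 2) / x)) * hcontract

end ChangeOfVariable

theorem stmt8 (q h₁ h₂ α₁ lam t₁ t₂ : ℝ) (N : ℕ)
    (hq : 0 < q) (hq1 : q ≠ 1) (ht₁ : t₁ ≠ 0) (ht₂ : t₂ ≠ 0)
    (hN : 0 < N) (hNlam : lam + α₁ = -(N : ℝ)) :
    confEq02 q h₁ h₂ α₁ lam t₁ t₂ (fun x =>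
      x ^ (-α₁) * ∑ n ∈ Finset.range (N + 1),
        (q ^ (-lam - α₁ + 1/2) / x) ^ n * qPoch q (q ^ (lam + α₁)) n *
          ∑ l ∈ Finset.range (n + 1),
            q ^ (-(l : ℝ) * ((n : ℝ) - (l : ℝ))) * (q ^ h₁ * t₁) ^ (n - l) *
              (q ^ h₂ * t₂) ^ l / (qPoch q q (n - l) * qPoch q q l)) := by
  have hq_abs : |q| ≠ 1 := by rwa [abs_of_pos hq]
  have ha : q ^ (lam + α₁) * q ^ N = 1 := by
    rw [hNlam, ← Real.rpow_natCast, ← Real.rpow_add hq, neg_add_cancel, Real.rpow_zero]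
  convert confEq02_of_reducedOp02_eq_zero hq ht₁ ht₂ fun y _ =>
    reducedOp02_eval_eq_zero hq.ne' hq_abs (coeff_truncatedSeries ha) y using 3 with x
  simp only [truncatedSeries, Polynomial.eval_finsetSum, Polynomial.eval_monomial,
    sum_range_eq_rogersSzegoInv hq.le]
  exact Finset.sum_congr rfl fun n _ => by ring
end

section
/- Let q be a real number with 0 < q < 1, let h₁, h₂, α₁, λ be real numbers and t₁, t₂ nonzero reals. Suppose y : ℝ_{>0} → ℝ satisfies the variant of the confluent q-hypergeometric equation of type (0,2) with parameters (h₁, h₂, α₁, λ, t₁, t₂) for all x > 0. Set α̃₁ = 1 - 2λ - α₁ and define u(x) := (q^{-h₁+1/2}·t₁⁻¹·x ; q)_∞ · (q^{-h₂+1/2}·t₂⁻¹·x ; q)_∞ · y(x), where (z;q)_∞ := ∏_{i=0}^{∞}(1 - z·q^i). Then u satisfies, for all x > 0: q^{2λ+1}·u(x/q) + (1 - q^{-h₁+1/2}t₁⁻¹x)(1 - q^{-h₂+1/2}t₂⁻¹x)·u(qx) - [q^{-α̃₁-h₁-h₂+1}·t₁⁻¹t₂⁻¹·x² - q^{λ+1/2}(q^{-h₂}t₂⁻¹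 + q^{-h₁}t₁⁻¹)x + q^{λ}(q+1)]·u(x) = 0, which is the variant of the confluent q-hypergeometric equation of type (2,0) with parameters l₁ = h₁, l₂ = h₂, α̃₁ and λ (multiplied through by q^{2λ+1}). -/
/-- The infinite q-Pochhammer symbol `(z;q)_∞ = ∏_{i=0}^{∞} (1 - z q^i)`. -/
noncomputable def qPochInf (q z : ℝ) : ℝ :=
  ∏' i : ℕ, (1 - z * q ^ i)

/-! Multiplication by a solution `φ` of `φ x = P x * φ (q * x)` moves the coefficient `P (x / q)` of
`y (x / q)` in a second-order `q`-difference equation to a coefficient `P x` of `y (q * x)`. The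
product of the two `q`-Pochhammer symbols is such a `φ`, with `P x = (1 - a * x) * (1 - b * x)`. -/

theorem multipliable_one_sub_mul_pow {R : Type*} [NormedCommRing R] [NormOneClass R]
    [CompleteSpace R] {q : R} (hq : ‖q‖ < 1) (z : R) :
    Multipliable fun i : ℕ ↦ 1 - z * q ^ i := by
  have hs : Summable fun i : ℕ ↦ ‖-z * q ^ i‖ :=
    ((summable_norm_geometric_of_norm_lt_one hq).mul_left ‖-z‖).of_nonneg_of_le
      (fun _ ↦ norm_nonneg _) fun _ ↦ norm_mul_le _ _
  simpa only [neg_mul, ← sub_eq_add_neg] using multipliable_one_add_of_summable hs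

section QPochhammer

variable {q : ℝ}

theorem qPochInf_eq_one_sub_mul (hq : |q| < 1) (z : ℝ) :
    qPochInf q z = (1 - z) * qPochInf q (q * z) := by
  have shift (i : ℕ) : 1 - q * z * q ^ i = 1 - z * q ^ (i + 1) := by ring
  have hm : Multipliable fun i : ℕ ↦ 1 - z * q ^ (i + 1) :=
    (multipliable_one_sub_mul_pow hq (q * z)).congr shift
  calc
    ∏' i : ℕ, (1 - z * q ^ i) = (1 - z * q ^ 0) * ∏' i : ℕ, (1 - z * q ^ (i + 1)) :=
      tprod_eq_zero_mul' (f := fun i : ℕ ↦ 1 - z * q ^ i) hm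
    _ = (1 - z) * ∏' i : ℕ, (1 - q * z * q ^ i) := by
      rw [pow_zero, mul_one, tprod_congr shift]

theorem qPochInf_mul_qPochInf_eq (hq : |q| < 1) (a b x : ℝ) :
    qPochInf q (a * x) * qPochInf q (b * x) =
      (1 - a * x) * (1 - b * x) * (qPochInf q (a * (q * x)) * qPochInf q (b * (q * x))) := by
  rw [qPochInf_eq_one_sub_mul hq (a * x), qPochInf_eq_one_sub_mul hq (b * x),
    mul_left_comm q a x, mul_left_comm q b x, mul_mul_mul_comm]

end QPochhammer

theorem qDifference_gauge_transform {K R : Type*} [CommGroupWithZero K] [CommRing R]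
    {q x : K} (hq : q ≠ 0) {φ P y : K → R} {c r : R} (hφ : ∀ x, φ x = P x * φ (q * x))
    (hy : y (q * x) + c * P (x / q) * y (x / q) - r * y x = 0) :
    c * (φ (x / q) * y (x / q)) + P x * (φ (q * x) * y (q * x)) - r * (φ x * y x) = 0 := by
  have hφ_div : φ (x / q) = P (x / q) * φ x := by
    rw [hφ (x / q), mul_div_cancel₀ x hq]
  linear_combination φ x * hy + c * y (x / q) * hφ_div - y (q * x) * hφ x

theorem rpow_add_half_mul_div {q : ℝ} (hq : 0 < q) (s t x : ℝ) :
    q ^ (s + 1/2) * t * (x / q) = q ^ (s - 1/2) * t * x := by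
  have hpow : q ^ (s - 1/2) = q ^ (s + 1/2) / q := by
    rw [← Real.rpow_sub_one hq.ne']
    ring_nf
  rw [hpow]
  ring

theorem stmt19 (q h₁ h₂ α₁ lam t₁ t₂ : ℝ)
    (hq0 : 0 < q) (hq1 : q < 1) (ht₁ : t₁ ≠ 0) (ht₂ : t₂ ≠ 0)
    (y u : ℝ → ℝ)
    (hy : confEq02 q h₁ h₂ α₁ lam t₁ t₂ y)
    (hu : ∀ x : ℝ,
      u x = qPochInf q (q ^ (-h₁ + 1/2) * t₁⁻¹ * x) * qPochInf q (q ^ (-h₂ + 1/2) * t₂⁻¹ * x)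
              * y x)
    (α₁' : ℝ) (hα₁' : α₁' = 1 - 2 * lam - α₁) :
    ∀ x : ℝ, 0 < x →
      q ^ (2 * lam + 1) * u (x / q)
      + (1 - q ^ (-h₁ + 1/2) * t₁⁻¹ * x) * (1 - q ^ (-h₂ + 1/2) * t₂⁻¹ * x) * u (q * x)
      - (q ^ (-α₁' - h₁ - h₂ + 1) * t₁⁻¹ * t₂⁻¹ * x ^ 2
          - q ^ (lam + 1/2) * (q ^ (-h₂) * t₂⁻¹ + q ^ (-h₁) * t₁⁻¹) * x
          + q ^ lam * (q + 1)) * u x = 0 := by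
  intro x hx
  have hq : |q| < 1 := abs_lt.mpr ⟨by linarith, hq1⟩
  have hexp : -α₁' - h₁ - h₂ + 1 = α₁ + 2 * lam - h₁ - h₂ := by rw [hα₁']; ring
  rw [hu, hu, hu, hexp, add_comm (q ^ (-h₂) * t₂⁻¹)]
  refine qDifference_gauge_transform hq0.ne'
    (qPochInf_mul_qPochInf_eq hq (q ^ (-h₁ + 1/2) * t₁⁻¹) (q ^ (-h₂ + 1/2) * t₂⁻¹)) ?_
  simpa only [rpow_add_half_mul_div hq0, mul_assoc] using hy x hx
end
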